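/- (Exponential moment bound for the second flow) Let ρ > 0, let h : V → ℝ change sign with max_{x∈V} h(x) > 0, let 0 < T < +∞, and let u : V × [0,T) → ℝ solve the second flow ∂_t u = α(t)h − R with ∫_V h e^{u(·,0)} dμ = 1. Then for every γ ≥ 1 there exists a constant C, depending only on (V, μ, W), T, ρ, h, the initial function u(·,0) and γ, such that sup_{0 ≤ t < T} ∫_V e^{γ u(·,t)} dμ ≤ C. -/

import Mathlib

open Real Finset

variable {V : Type*}

/-- Discrete integral: `∫_V f dμ = Σ_x μ(x) f(x)`. -/
noncomputable def intV [Fintype V] (μ f : V → ℝ) : ℝ := ∑ x, μ x * f x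

/-- Volume `|V| = Σ_x μ(x)`. -/
noncomputable def volV [Fintype V] (μ : V → ℝ) : ℝ := ∑ x, μ x

/-- The nonlocal (fractional graph Laplacian type) operator
`Lu(x) = (1/μ(x)) Σ_{y ≠ x} W(x,y)(u(x) − u(y))`. -/
noncomputable def opL [Fintype V] [DecidableEq V] (μ : V → ℝ) (W : V → V → ℝ)
    (u : V → ℝ) (x : V) : ℝ :=
  (1 / μ x) * ∑ y ∈ univ.filter (fun y => y ≠ x), W x y * (u x - u y)

/-- Gradient form `∇u·∇v(x) = (1/(2μ(x))) Σ_{y ≠ x} W(x,y)(u(x)−u(y))(v(x)−v(y))`. -/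
noncomputable def gradForm [Fintype V] [DecidableEq V] (μ : V → ℝ) (W : V → V → ℝ)
    (u v : V → ℝ) (x : V) : ℝ :=
  (1 / (2 * μ x)) * ∑ y ∈ univ.filter (fun y => y ≠ x), W x y * (u x - u y) * (v x - v y)

/-- `|∇u|²(x) = ∇u·∇u(x)`. -/
noncomputable def gradSq [Fintype V] [DecidableEq V] (μ : V → ℝ) (W : V → V → ℝ)
    (u : V → ℝ) (x : V) : ℝ := gradForm μ W u u x


/-- The scalar curvature type function `R = (1/ρ) e^{−u} (Lu + ρ/|V|)`. -/
noncomputable def Rcurv [Fintype V] [DecidableEq V] (μ : V → ℝ) (W : V → V → ℝ)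
    (ρ : ℝ) (u : V → ℝ) (x : V) : ℝ :=
  (1 / ρ) * Real.exp (-(u x)) * (opL μ W u x + ρ / volV μ)

/-- The normalized coefficient `α = (∫_V h R e^u dμ) / (∫_V h² e^u dμ)`. -/
noncomputable def alphaC [Fintype V] [DecidableEq V] (μ : V → ℝ) (W : V → V → ℝ)
    (ρ : ℝ) (h : V → ℝ) (u : V → ℝ) : ℝ :=
  intV μ (fun x => h x * Rcurv μ W ρ u x * Real.exp (u x)) /
    intV μ (fun x => (h x) ^ 2 * Real.exp (u x))

/-!
Up to the factor `1 / ρ` and the weight `e^{-u}`, the flow is the gradient flow of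
`J(u) = ½ ∫ |∇u|² dμ + (ρ / |V|) ∫ u dμ`, projected orthogonally to `h` in `L²(e^u dμ)`; hence `J`
decreases in time. Since any two vertices interact, Young's inequality in the form
`a (u(z) - u(y)) ≤ ¼ W(z,y) (u(z) - u(y))² + a² / W(z,y)` lets the Dirichlet energy absorb the
deviation of `u(z)` from the mean of `u`, so `ρ u(z) ≤ J(u) + K`. The initial energy therefore
bounds `u` from above uniformly in time, and with it every exponential moment.
-/

section

variable [Fintype V] {μ : V → ℝ}

lemma intV_mono (hμ : ∀ x, 0 ≤ μ x) {f g : V → ℝ} (hfg : ∀ x, f x ≤ g x) :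
    intV μ f ≤ intV μ g :=
  sum_le_sum fun x _ => mul_le_mul_of_nonneg_left (hfg x) (hμ x)

lemma intV_nonneg (hμ : ∀ x, 0 ≤ μ x) {f : V → ℝ} (hf : ∀ x, 0 ≤ f x) : 0 ≤ intV μ f :=
  sum_nonneg fun x _ => mul_nonneg (hμ x) (hf x)

lemma mul_le_intV (hμ : ∀ x, 0 ≤ μ x) {f : V → ℝ} (hf : ∀ x, 0 ≤ f x) (z : V) :
    μ z * f z ≤ intV μ f :=
  single_le_sum (f := fun x => μ x * f x) (fun x _ => mul_nonneg (hμ x) (hf x)) (mem_univ z)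

lemma intV_sub (f g : V → ℝ) : intV μ (fun x => f x - g x) = intV μ f - intV μ g := by
  simp only [intV, mul_sub, sum_sub_distrib]

lemma intV_add (f g : V → ℝ) : intV μ (fun x => f x + g x) = intV μ f + intV μ g := by
  simp only [intV, mul_add, sum_add_distrib]

lemma intV_const_mul (c : ℝ) (f : V → ℝ) : intV μ (fun x => c * f x) = c * intV μ f := by
  simp only [intV, mul_sum, mul_left_comm]

lemma intV_const (c : ℝ) : intV μ (fun _ => c) = volV μ * c := by
  rw [intV, volV, sum_mul]

lemma hasDerivWithinAt_intV {f : ℝ → V → ℝ} {f' : V → ℝ} {s : Set ℝ} {t : ℝ}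
    (hf : ∀ x, HasDerivWithinAt (fun r => f r x) (f' x) s t) :
    HasDerivWithinAt (fun r => intV μ (f r)) (intV μ f') s t :=
  .fun_sum fun x _ => (hf x).const_mul (μ x)

variable [DecidableEq V] {W : V → V → ℝ}

lemma mul_opL {x : V} (hx : μ x ≠ 0) (u : V → ℝ) :
    μ x * opL μ W u x = ∑ y, W x y * (u x - u y) := by
  rw [opL, ← mul_assoc, mul_one_div_cancel hx, one_mul, sum_filter_of_ne]
  rintro y - hne rfl
  exact hne (by simp)

lemma mul_gradForm {x : V} (hx : μ x ≠ 0) (u v : V → ℝ) :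
    μ x * gradForm μ W u v x = 1 / 2 * ∑ y, W x y * (u x - u y) * (v x - v y) := by
  rw [gradForm, ← mul_assoc, sum_filter_of_ne]
  · field_simp
  · rintro y - hne rfl
    exact hne (by simp)

lemma intV_gradForm (hμ : ∀ x, μ x ≠ 0) (hW : ∀ x y, W x y = W y x) (u v : V → ℝ) :
    intV μ (gradForm μ W u v) = intV μ (fun x => v x * opL μ W u x) := by
  have swap : ∑ x, ∑ y, W x y * (u x - u y) * v y = -∑ x, ∑ y, W x y * (u x - u y) * v x := by
    rw [sum_comm]
    simp only [← sum_neg_distrib]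
    refine sum_congr rfl fun y _ => sum_congr rfl fun x _ => ?_
    rw [hW x y]
    ring
  calc intV μ (gradForm μ W u v)
      = 1 / 2 * ∑ x, ∑ y, W x y * (u x - u y) * (v x - v y) := by
        simp only [intV, mul_gradForm (hμ _), mul_sum]
    _ = ∑ x, ∑ y, W x y * (u x - u y) * v x := by
        simp only [mul_sub _ (v _), sum_sub_distrib, swap]
        ring
    _ = intV μ (fun x => v x * opL μ W u x) := by
        simp only [intV, mul_comm (v _), ← mul_assoc (μ _), mul_opL (hμ _), sum_mul]

lemma gradSq_nonneg (hμ : ∀ x, 0 ≤ μ x) (hW : ∀ x y, x ≠ y → 0 ≤ W x y) (u : V → ℝ) (x : V) :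
    0 ≤ gradSq μ W u x := by
  refine mul_nonneg (one_div_nonneg.2 (mul_nonneg zero_le_two (hμ x))) (sum_nonneg fun y hy => ?_)
  rw [mul_assoc]
  exact mul_nonneg (hW x y (mem_filter.1 hy).2.symm) (mul_self_nonneg _)

lemma hasDerivWithinAt_gradSq {u : ℝ → V → ℝ} {v : V → ℝ} {s : Set ℝ} {t : ℝ}
    (hu : HasDerivWithinAt u v s t) (x : V) :
    HasDerivWithinAt (fun r => gradSq μ W (u r) x) (2 * gradForm μ W (u t) v x) s t := by
  have hdiff (y : V) : HasDerivWithinAt (fun r => u r x - u r y) (v x - v y) s t :=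
    (hasDerivWithinAt_pi.1 hu x).fun_sub (hasDerivWithinAt_pi.1 hu y)
  have hsum := (HasDerivWithinAt.fun_sum (u := univ.filter (· ≠ x)) fun y _ =>
    ((hdiff y).const_mul (W x y)).fun_mul (hdiff y)).const_mul (1 / (2 * μ x))
  refine hsum.congr_deriv ?_
  rw [gradForm, mul_left_comm, mul_sum _ _ 2]
  exact congrArg _ (sum_congr rfl fun y _ => by ring)

/-- The Liouville energy `J(u) = ½ ∫ |∇u|² dμ + (ρ / |V|) ∫ u dμ`, a Lyapunov functional of the
second flow. The usual term `-ρ log ∫ h e^u dμ` is omitted because the flow conserves it. -/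
noncomputable def liouvilleEnergy (μ : V → ℝ) (W : V → V → ℝ) (ρ : ℝ) (u : V → ℝ) : ℝ :=
  1 / 2 * intV μ (gradSq μ W u) + ρ / volV μ * intV μ u

lemma hasDerivWithinAt_liouvilleEnergy (hμ : ∀ x, μ x ≠ 0) (hW : ∀ x y, W x y = W y x) (ρ : ℝ)
    {u : ℝ → V → ℝ} {v : V → ℝ} {s : Set ℝ} {t : ℝ} (hu : HasDerivWithinAt u v s t) :
    HasDerivWithinAt (fun r => liouvilleEnergy μ W ρ (u r))
      (intV μ (fun x => v x * (opL μ W (u t) x + ρ / volV μ))) s t := by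
  have hgrad := hasDerivWithinAt_intV (μ := μ) (hasDerivWithinAt_gradSq (μ := μ) (W := W) hu)
  have hmean := hasDerivWithinAt_intV (μ := μ) (hasDerivWithinAt_pi.1 hu)
  refine ((hgrad.const_mul (1 / 2)).fun_add (hmean.const_mul (ρ / volV μ))).congr_deriv ?_
  simp only [mul_add, intV_add, mul_comm (v _) (ρ / volV μ), intV_const_mul,
    ← intV_gradForm hμ hW]
  ring

lemma mul_intV_sub_le {z : V} (hz : μ z ≠ 0) (hW : ∀ y, y ≠ z → 0 < W z y) (c : ℝ) (u : V → ℝ) :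
    c * intV μ (fun y => u z - u y) ≤
      1 / 2 * (μ z * gradSq μ W u z) + ∑ y with y ≠ z, (c * μ y) ^ 2 / W z y := by
  have young {w : ℝ} (hw : 0 < w) (a d : ℝ) : a * d ≤ 1 / 4 * (w * d * d) + a ^ 2 / w := by
    have hsq : 1 / 4 * (w * d * d) + a ^ 2 / w - a * d = (w * d / 2 - a) ^ 2 / w := by
      field_simp
      ring
    linarith [div_nonneg (sq_nonneg (w * d / 2 - a)) hw.le]
  calc c * intV μ (fun y => u z - u y)
      = ∑ y with y ≠ z, c * μ y * (u z - u y) := by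
        simp only [intV, mul_sum, ← mul_assoc]
        rw [sum_filter_of_ne]
        rintro y - hne rfl
        exact hne (by simp)
    _ ≤ ∑ y with y ≠ z, (1 / 4 * (W z y * (u z - u y) * (u z - u y)) + (c * μ y) ^ 2 / W z y) :=
        sum_le_sum fun y hy => young (hW y (mem_filter.1 hy).2) _ _
    _ = 1 / 2 * (μ z * gradSq μ W u z) + ∑ y with y ≠ z, (c * μ y) ^ 2 / W z y := by
        rw [sum_add_distrib, ← mul_sum, gradSq, gradForm]
        field_simp
        ring

lemma exists_forall_mul_le_liouvilleEnergy_add (hμ : ∀ x, 0 < μ x)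
    (hW : ∀ x y, x ≠ y → 0 < W x y) (ρ : ℝ) :
    ∃ K : ℝ, ∀ (u : V → ℝ) (z : V), ρ * u z ≤ liouvilleEnergy μ W ρ u + K := by
  obtain ⟨K, hK⟩ := Finite.exists_le fun z : V => ∑ y with y ≠ z, (ρ / volV μ * μ y) ^ 2 / W z y
  refine ⟨K, fun u z => ?_⟩
  have hvol : 0 < volV μ := sum_pos (fun x _ => hμ x) ⟨z, mem_univ z⟩
  have hgrad : μ z * gradSq μ W u z ≤ intV μ (gradSq μ W u) :=
    mul_le_intV (fun x => (hμ x).le)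
      (gradSq_nonneg (fun x => (hμ x).le) (fun x y hxy => (hW x y hxy).le) u) z
  have hmean : ρ * u z = ρ / volV μ * intV μ (fun y => u z - u y) + ρ / volV μ * intV μ u := by
    rw [intV_sub, intV_const]
    field_simp
    ring
  have hdev := mul_intV_sub_le (hμ z).ne' (fun y hy => hW z y hy.symm) (ρ / volV μ) u
  rw [liouvilleEnergy]
  linarith [hK z]

/-- The velocity `α h - R` of the second flow at the state `u`. -/
noncomputable def secondFlowVelocity (μ : V → ℝ) (W : V → V → ℝ) (ρ : ℝ) (h u : V → ℝ) (x : V) :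
    ℝ :=
  alphaC μ W ρ h u * h x - Rcurv μ W ρ u x

lemma opL_add_eq_mul_Rcurv {ρ : ℝ} (hρ : ρ ≠ 0) (u : V → ℝ) (x : V) :
    opL μ W u x + ρ / volV μ = ρ * (Rcurv μ W ρ u x * exp (u x)) := by
  rw [Rcurv, exp_neg]
  field_simp

lemma intV_mul_secondFlowVelocity_mul_exp (hμ : ∀ x, 0 < μ x) (ρ : ℝ) {h : V → ℝ} (hh : h ≠ 0)
    (u : V → ℝ) :
    intV μ (fun x => h x * secondFlowVelocity μ W ρ h u x * exp (u x)) = 0 := by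
  obtain ⟨z, hz⟩ := Function.ne_iff.1 hh
  have hpos : 0 < intV μ (fun x => h x ^ 2 * exp (u x)) :=
    (mul_pos (hμ z) (mul_pos (sq_pos_of_ne_zero hz) (exp_pos _))).trans_le
      (mul_le_intV (fun x => (hμ x).le)
        (fun x => mul_nonneg (sq_nonneg (h x)) (exp_pos (u x)).le) z)
  calc intV μ (fun x => h x * secondFlowVelocity μ W ρ h u x * exp (u x))
      = alphaC μ W ρ h u * intV μ (fun x => h x ^ 2 * exp (u x))
          - intV μ (fun x => h x * Rcurv μ W ρ u x * exp (u x)) := by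
        rw [← intV_const_mul, ← intV_sub]
        congr 1 with x
        rw [secondFlowVelocity]
        ring
    _ = 0 := by rw [alphaC, div_mul_cancel₀ _ hpos.ne', sub_self]

lemma intV_secondFlowVelocity_mul_opL_add (hμ : ∀ x, 0 < μ x) {ρ : ℝ} (hρ : ρ ≠ 0) {h : V → ℝ}
    (hh : h ≠ 0) (u : V → ℝ) :
    intV μ (fun x => secondFlowVelocity μ W ρ h u x * (opL μ W u x + ρ / volV μ)) =
      -ρ * intV μ (fun x => secondFlowVelocity μ W ρ h u x ^ 2 * exp (u x)) := by
  calc intV μ (fun x => secondFlowVelocity μ W ρ h u x * (opL μ W u x + ρ / volV μ))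
      = ρ * alphaC μ W ρ h u * intV μ (fun x => h x * secondFlowVelocity μ W ρ h u x * exp (u x))
          - ρ * intV μ (fun x => secondFlowVelocity μ W ρ h u x ^ 2 * exp (u x)) := by
        simp only [← intV_const_mul, ← intV_sub]
        congr 1 with x
        rw [opL_add_eq_mul_Rcurv hρ, secondFlowVelocity]
        ring
    _ = -ρ * intV μ (fun x => secondFlowVelocity μ W ρ h u x ^ 2 * exp (u x)) := by
        rw [intV_mul_secondFlowVelocity_mul_exp hμ ρ hh u]
        ring

lemma antitoneOn_liouvilleEnergy (hμ : ∀ x, 0 < μ x) (hWsym : ∀ x y, W x y = W y x) {ρ : ℝ}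
    (hρ : 0 < ρ) {h : V → ℝ} (hh : h ≠ 0) {s : Set ℝ} (hs : Convex ℝ s) {u : ℝ → V → ℝ}
    (hu : ∀ t ∈ s, HasDerivWithinAt u (secondFlowVelocity μ W ρ h (u t)) s t) :
    AntitoneOn (fun t => liouvilleEnergy μ W ρ (u t)) s := by
  have hderiv := fun t ht =>
    hasDerivWithinAt_liouvilleEnergy (fun x => (hμ x).ne') hWsym ρ (hu t ht)
  refine antitoneOn_of_hasDerivWithinAt_nonpos hs (fun t ht => (hderiv t ht).continuousWithinAt)
    (fun t ht => (hderiv t (interior_subset ht)).mono interior_subset) fun t _ => ?_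
  rw [intV_secondFlowVelocity_mul_opL_add hμ hρ.ne' hh, neg_mul]
  exact neg_nonpos.2 (mul_nonneg hρ.le
    (intV_nonneg (fun x => (hμ x).le) fun x => mul_nonneg (sq_nonneg _) (exp_pos _).le))

end

theorem second_flow_exp_moment_general [Fintype V] [DecidableEq V]
    {μ : V → ℝ} {W : V → V → ℝ}
    (hμ : ∀ x, 0 < μ x)
    (hWsym : ∀ x y, W x y = W y x)
    (hWpos : ∀ x y, x ≠ y → 0 < W x y)
    {ρ : ℝ} (hρ : 0 < ρ) (u₀ : V → ℝ) {γ : ℝ} (hγ : 0 ≤ γ) :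
    ∃ C : ℝ, ∀ h : V → ℝ, h ≠ 0 → ∀ (T : ℝ) (u : ℝ → V → ℝ), u 0 = u₀ →
      (∀ t ∈ Set.Ico (0 : ℝ) T,
        HasDerivWithinAt u (secondFlowVelocity μ W ρ h (u t)) (Set.Ico 0 T) t) →
      ∀ t ∈ Set.Ico (0 : ℝ) T, intV μ (fun x => exp (γ * u t x)) ≤ C := by
  obtain ⟨K, hK⟩ := exists_forall_mul_le_liouvilleEnergy_add hμ hWpos ρ
  refine ⟨intV μ fun _ => exp (γ * ((liouvilleEnergy μ W ρ u₀ + K) / ρ)), ?_⟩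
  rintro h hh T u rfl hu t ht
  have henergy : liouvilleEnergy μ W ρ (u t) ≤ liouvilleEnergy μ W ρ (u 0) :=
    antitoneOn_liouvilleEnergy hμ hWsym hρ hh (convex_Ico 0 T) hu
      ⟨le_rfl, ht.1.trans_lt ht.2⟩ ht ht.1
  have hupper (x : V) : u t x ≤ (liouvilleEnergy μ W ρ (u 0) + K) / ρ := by
    rw [le_div_iff₀' hρ]
    linarith [hK (u t) x]
  exact intV_mono (fun x => (hμ x).le) fun x => by gcongr; exact hupper x

/-- (Exponential moment bound for the second flow) For every `γ ≥ 1`,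
`sup_{0 ≤ t < T} ∫_V e^{γ u(·,t)} dμ` is finite along the second flow on a finite interval. -/
theorem second_flow_exp_moment [Fintype V] [Nonempty V] [DecidableEq V]
    (μ : V → ℝ) (W : V → V → ℝ)
    (hμ : ∀ x, 0 < μ x)
    (hWsym : ∀ x y, W x y = W y x)
    (hWpos : ∀ x y, x ≠ y → 0 < W x y)
    (ρ : ℝ) (hρ : 0 < ρ)
    (h : V → ℝ) (hpos : ∃ x, 0 < h x) (hneg : ∃ x, h x < 0)
    (T : ℝ) (hT : 0 < T) (u : ℝ → V → ℝ)
    (hinit : intV μ (fun x => h x * Real.exp (u 0 x)) = 1)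
    (hflow : ∀ x, ∀ t ∈ Set.Ico (0 : ℝ) T,
      HasDerivAt (fun s => u s x)
        (alphaC μ W ρ h (u t) * h x - Rcurv μ W ρ (u t) x) t)
    (γ : ℝ) (hγ : 1 ≤ γ) :
    ∃ C : ℝ, ∀ t ∈ Set.Ico (0 : ℝ) T,
      intV μ (fun x => Real.exp (γ * u t x)) ≤ C := by
  obtain ⟨C, hC⟩ := second_flow_exp_moment_general hμ hWsym hWpos hρ (u 0) (zero_le_one.trans hγ)
  exact ⟨C, hC h (fun h0 => by simp [h0] at hpos) T u rfl fun t ht =>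
    hasDerivWithinAt_pi.2 fun x => (hflow x t ht).hasDerivWithinAt⟩
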